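/- arXiv:2310.13175 — 10 statements merged into one kernel-verified Lean document; each statement's English description precedes it below -/
import Mathlib

section
/- Let Ω be a linear order and let f, fℓ, fr : Ω → Ω be functions such that (fℓ, f) and (f, fr) are Galois connections. If a ∈ Ω does not lie in the range of f, then fr(a) is covered by fℓ(a) (fr(a) ⋖ fℓ(a)) and f(fr(a)) < a < f(fℓ(a)). -/
/-- If `f` has dual residual `fl` and residual `fr` on a linear order, and `a`
is not in the range of `f`, then `fr a ⋖ fl a` and `f (fr a) < a < f (fl a)`. -/
theorem stmt_1 {Ω : Type*} [LinearOrder Ω] (f fl fr : Ω → Ω)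
    (hl : GaloisConnection fl f) (hr : GaloisConnection f fr)
    (a : Ω) (ha : a ∉ Set.range f) :
    fr a ⋖ fl a ∧ f (fr a) < a ∧ a < f (fl a) := by
  have h1 : f (fr a) < a := lt_of_le_of_ne (hr.l_u_le a) (fun h => ha ⟨_, h⟩)
  have h2 : a < f (fl a) := lt_of_le_of_ne (hl.le_u_l a) (fun h => ha ⟨_, h.symm⟩)
  refine ⟨⟨?_, ?_⟩, h1, h2⟩
  · exact hr.monotone_l.reflect_lt (h1.trans h2)
  · intro c hc1 hc2
    have h3 : ¬ f c ≤ a := fun h => absurd ((hr c a).1 h) (not_le.2 hc1)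
    have h4 : ¬ a ≤ f c := fun h => absurd ((hl a c).2 h) (not_le.2 hc2)
    exact (le_total a (f c)).elim h4 h3
end

section
/- Let Ω be a linear order and f : Ω → Ω. Then f is both residuated and dually residuated if and only if f is monotone and the following two conditions hold: (1) for every a in the range of f there exist b ≤ c in Ω with f⁻¹{a} equal to the closed interval [b, c]; (2) for every a not in the range of f there exist b, c ∈ Ω with b covered by c (b ⋖ c) and f(b) < a < f(c). -/
/-- A map on a linear order is residuated and dually residuated iff it is monotone,
preimages of range points are closed intervals, and every non-range point is strictly
between the images of a covering pair. -/
theorem stmt_2 {Ω : Type*} [LinearOrder Ω] (f : Ω → Ω) :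
    ((∃ fr, GaloisConnection f fr) ∧ (∃ fl, GaloisConnection fl f)) ↔
      (Monotone f ∧
        (∀ a ∈ Set.range f, ∃ b c : Ω, b ≤ c ∧ f ⁻¹' {a} = Set.Icc b c) ∧
        (∀ a : Ω, a ∉ Set.range f → ∃ b c : Ω, b ⋖ c ∧ f b < a ∧ a < f c)) := by
  constructor
  · rintro ⟨⟨fr, hr⟩, ⟨fl, hl⟩⟩
    refine ⟨hr.monotone_l, ?_, ?_⟩
    · rintro a ⟨x, rfl⟩
      refine ⟨fl (f x), fr (f x), ((hl _ _).2 le_rfl).trans ((hr _ _).1 le_rfl), ?_⟩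
      ext y
      simp only [Set.mem_preimage, Set.mem_singleton_iff, Set.mem_Icc]
      rw [hl (f x) y, ← hr y (f x), le_antisymm_iff, and_comm]
    · intro a ha
      have h1 : f (fr a) < a :=
        lt_of_le_of_ne ((hr _ _).2 le_rfl) (fun h => ha ⟨_, h⟩)
      have h2 : a < f (fl a) :=
        lt_of_le_of_ne ((hl _ _).1 le_rfl) (fun h => ha ⟨_, h.symm⟩)
      refine ⟨fr a, fl a, ⟨hr.monotone_l.reflect_lt (h1.trans h2), ?_⟩, h1, h2⟩
      intro x hx hx'
      have h3 : a < f x := not_le.1 (fun h => not_le.2 hx ((hr _ _).1 h))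
      have h4 : f x < a := not_le.1 (fun h => not_le.2 hx' ((hl _ _).2 h))
      exact lt_asymm h3 h4
  · rintro ⟨hm, h1, h2⟩
    have key : ∀ a, (∃ c, ∀ x, f x ≤ a ↔ x ≤ c) ∧ (∃ b, ∀ x, b ≤ x ↔ a ≤ f x) := by
      intro a
      by_cases ha : a ∈ Set.range f
      · obtain ⟨b, c, hbc, h⟩ := h1 a ha
        have hi : ∀ x, f x = a ↔ b ≤ x ∧ x ≤ c := fun x => by
          have : x ∈ f ⁻¹' {a} ↔ x ∈ Set.Icc b c := by rw [h]
          simpa using this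
        have hb := (hi b).2 ⟨le_rfl, hbc⟩
        have hc := (hi c).2 ⟨hbc, le_rfl⟩
        refine ⟨⟨c, fun x => ⟨fun hx => ?_, fun hx => (hm hx).trans hc.le⟩⟩,
          ⟨b, fun x => ⟨fun hx => hb.ge.trans (hm hx), fun hx => ?_⟩⟩⟩
        · by_contra hn
          exact hn ((hi x).1 (le_antisymm hx (hc.ge.trans (hm (not_le.1 hn).le)))).2
        · by_contra hn
          exact hn ((hi x).1 (le_antisymm ((hm (not_le.1 hn).le).trans hb.le) hx)).1
      · obtain ⟨b, c, hbc, hb, hc⟩ := h2 a ha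
        refine ⟨⟨b, fun x => ⟨fun hx => ?_, fun hx => (hm hx).trans hb.le⟩⟩,
          ⟨c, fun x => ⟨fun hx => hc.le.trans (hm hx), fun hx => ?_⟩⟩⟩
        · by_contra hn
          exact absurd (hc.trans_le ((hm (hbc.ge_of_gt (not_le.1 hn))).trans hx)) (lt_irrefl _)
        · by_contra hn
          exact absurd ((hx.trans (hm (hbc.le_of_lt (not_le.1 hn)))).trans_lt hb) (lt_irrefl _)
    choose fr hr using fun a => (key a).1
    choose fl hl using fun a => (key a).2
    exact ⟨⟨fr, fun a b => hr b a⟩, ⟨fl, fun a b => hl a b⟩⟩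
end

section
/- Let Ω be an integral chain and let f, fℓ : Ω → Ω be such that (fℓ, f) is a Galois connection (i.e., f is dually residuated with dual residual fℓ). Then fℓ is itself dually residuated: there exists h : Ω → Ω such that (h, fℓ) is a Galois connection. -/
/-- On an integral chain (every element has an upper cover and a lower cover),
the dual residual `fl` of a dually residuated map `f` is itself dually residuated. -/
theorem stmt_3 {Ω : Type*} [LinearOrder Ω]
    (hint : ∀ a : Ω, (∃ b, a ⋖ b) ∧ (∃ b, b ⋖ a))
    (f fl : Ω → Ω) (hl : GaloisConnection fl f) :
    ∃ h : Ω → Ω, GaloisConnection h fl := by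
  choose s hs using fun a => (hint a).1
  choose p hp using fun a => (hint a).2
  refine ⟨fun a => s (f (p a)), fun a b => ?_⟩
  have h1 : s (f (p a)) ≤ b ↔ f (p a) < b :=
    ⟨fun h => lt_of_lt_of_le (hs _).1 h, fun h => not_lt.1 ((hs _).2 h)⟩
  have h2 : a ≤ fl b ↔ p a < fl b :=
    ⟨fun h => lt_of_lt_of_le (hp _).1 h, fun h => not_lt.1 ((hp _).2 h)⟩
  show s (f (p a)) ≤ b ↔ a ≤ fl b
  rw [h1, h2]
  exact (lt_iff_lt_of_le_iff_le (hl b (p a))).symm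
end

section
/- Let Ω be an integral chain and f : Ω → Ω. Then f has residuals and dual residuals of all orders — that is, there exists a family g : ℤ → (Ω → Ω) with g(0) = f such that for every n ∈ ℤ the pair (g(n+1), g(n)) is a Galois connection — if and only if f is residuated and dually residuated. -/
/-- On an integral chain, a map has residuals and dual residuals of all orders
iff it is residuated and dually residuated. -/
theorem stmt_4 {Ω : Type*} [LinearOrder Ω]
    (hint : ∀ a : Ω, (∃ b, a ⋖ b) ∧ (∃ b, b ⋖ a)) (f : Ω → Ω) :
    (∃ g : ℤ → Ω → Ω, g 0 = f ∧ ∀ n : ℤ, GaloisConnection (g (n + 1)) (g n)) ↔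
      ((∃ fr, GaloisConnection f fr) ∧ (∃ fl, GaloisConnection fl f)) := by
  constructor
  · rintro ⟨g, rfl, h⟩
    exact ⟨⟨g (-1), by simpa using h (-1)⟩, ⟨g 1, by simpa using h 0⟩⟩
  · rintro ⟨-, l, hl⟩
    choose s hs using fun a => (hint a).1
    choose p hp using fun a => (hint a).2
    have hlt : ∀ a b, a < b ↔ s a ≤ b := fun a b =>
      ⟨fun h => (hs a).ge_of_gt h, fun h => (hs a).lt.trans_le h⟩
    have hsp : ∀ a, s (p a) = a := fun a => (hs (p a)).unique_right (hp a)
    have hps : ∀ a, p (s a) = a := fun a => (hp (s a)).unique_left (hs a)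
    have hmono : StrictMono s := fun a b h => ((hlt a b).1 h).trans_lt (hs b).lt
    let σ : Ω ≃o Ω :=
      { toFun := s, invFun := p, left_inv := hps, right_inv := hsp
        map_rel_iff' := hmono.le_iff_le }
    have key : GaloisConnection (fun x => σ (f (σ⁻¹ x))) l := by
      intro a b
      change s (f (p a)) ≤ b ↔ a ≤ l b
      rw [← hlt, ← not_le, ← hl, not_le, hlt, hsp]
    have conj : ∀ (τ : Ω ≃o Ω) (u v : Ω → Ω), GaloisConnection u v →
        GaloisConnection (fun x => τ (u (τ⁻¹ x))) (fun x => τ (v (τ⁻¹ x))) := by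
      intro τ u v h a b
      change τ (u (τ.symm a)) ≤ b ↔ a ≤ τ (v (τ.symm b))
      rw [← OrderIso.le_symm_apply, h, OrderIso.symm_apply_le]
    refine ⟨fun n x => (σ ^ (n / 2)) ((if n % 2 = 0 then f else l) ((σ ^ (n / 2))⁻¹ x)),
      ?_, ?_⟩
    · funext x
      simp
    · intro n
      rcases Int.emod_two_eq_zero_or_one n with h | h
      · have h1 : (n + 1) % 2 = 1 := by omega
        have h2 : (n + 1) / 2 = n / 2 := by omega
        simp only [h, h1, h2]
        exact conj _ _ _ hl
      · have h1 : (n + 1) % 2 = 0 := by omega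
        have h2 : (n + 1) / 2 = n / 2 + 1 := by omega
        simp only [h, h1, h2, zpow_add, zpow_one, mul_inv_rev]
        exact conj _ _ _ key
end

section
/- Let Ω be an integral chain and f : Ω → Ω. Then f has residuals and dual residuals of all orders (f ∈ F(Ω)) if and only if f is monotone and: (1) for every a in the range of f there exist b ≤ c in Ω with f⁻¹{a} = [b, c]; (2) for every a not in the range of f there exist b, c ∈ Ω with b covered by c and f(b) < a < f(c). -/
theorem aux_shift {Ω : Type*} [LinearOrder Ω]
    (hint : ∀ a : Ω, (∃ b, a ⋖ b) ∧ (∃ b, b ⋖ a)) :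
    ∃ s : Ω ≃o Ω, ∀ x y, s x ≤ y ↔ x < y := by
  choose u hu using fun a => (hint a).1
  choose d hd using fun a => (hint a).2
  have hul : ∀ x y, u x ≤ y ↔ x < y := fun x y =>
    ⟨fun h => (hu x).lt.trans_le h, fun h => not_lt.1 fun h' => (hu x).2 h h'⟩
  have hdl : ∀ x y, x ≤ d y ↔ x < y := fun x y =>
    ⟨fun h => h.trans_lt (hd y).lt, fun h => not_lt.1 fun h' => (hd y).2 h' h⟩
  refine ⟨{ toFun := u, invFun := d, left_inv := ?_, right_inv := ?_, map_rel_iff' := ?_ }, hul⟩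
  · intro x
    apply le_antisymm
    · rw [← not_lt, ← hul, ← not_lt, not_not]
      exact (hd _).lt
    · rw [hdl]
      exact (hu _).lt
  · intro x
    apply le_antisymm
    · rw [hul]
      exact (hd _).lt
    · rw [← not_lt, ← hdl, ← not_lt, not_not]
      exact (hu _).lt
  · intro x y
    change u x ≤ u y ↔ x ≤ y
    rw [hul, ← not_le, hul, not_lt]

theorem aux_conj {Ω : Type*} [LinearOrder Ω] (t : Ω ≃o Ω) {l f : Ω → Ω}
    (h : GaloisConnection l f) :
    GaloisConnection (fun x => t (l (t⁻¹ x))) (fun x => t (f (t⁻¹ x))) := by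
  intro x y
  have e : ∀ a b, t a ≤ b ↔ a ≤ t⁻¹ b := fun a b => (t.le_symm_apply).symm
  have e' : ∀ a b, a ≤ t b ↔ t⁻¹ a ≤ b := fun a b => (t.symm_apply_le).symm
  simp only [e, e', h _ _]

theorem aux_double {Ω : Type*} [LinearOrder Ω] (s : Ω ≃o Ω)
    (hs : ∀ x y, s x ≤ y ↔ x < y) {l f : Ω → Ω} (h : GaloisConnection l f) :
    GaloisConnection (fun x => s (f (s⁻¹ x))) l := by
  intro x y
  have e : s⁻¹ x < l y ↔ x ≤ l y := by
    rw [← hs]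
    exact Iff.of_eq (congrArg (· ≤ l y) (s.apply_symm_apply x))
  rw [← e]
  simp only [hs]
  rw [← not_le, ← h y, not_le]

theorem aux_family {Ω : Type*} [LinearOrder Ω] (s : Ω ≃o Ω)
    (hs : ∀ x y, s x ≤ y ↔ x < y) {l f : Ω → Ω} (h : GaloisConnection l f) :
    ∃ g : ℤ → Ω → Ω, g 0 = f ∧ ∀ n : ℤ, GaloisConnection (g (n + 1)) (g n) := by
  refine ⟨fun n x => (s ^ (n / 2)) ((if n % 2 = 0 then f else l) ((s ^ (n / 2))⁻¹ x)), ?_, ?_⟩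
  · funext x
    simp
  · intro n
    rcases Int.emod_two_eq_zero_or_one n with hn | hn
    · have h1 : (n + 1) / 2 = n / 2 := by omega
      have h2 : (n + 1) % 2 = 1 := by omega
      simp only [h1, h2, hn]
      simpa using aux_conj (s ^ (n / 2)) h
    · have h1 : (n + 1) / 2 = n / 2 + 1 := by omega
      have h2 : (n + 1) % 2 = 0 := by omega
      have := aux_conj (s ^ (n / 2)) (aux_double s hs h)
      simp only [h1, h2, hn, zpow_add_one, mul_inv_rev]
      simpa using this

/-- On an integral chain, `f ∈ F(Ω)` iff `f` is monotone, preimages of range points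
are closed intervals, and every non-range point lies strictly between the images of
a covering pair. -/
theorem stmt_5 {Ω : Type*} [LinearOrder Ω]
    (hint : ∀ a : Ω, (∃ b, a ⋖ b) ∧ (∃ b, b ⋖ a)) (f : Ω → Ω) :
    (∃ g : ℤ → Ω → Ω, g 0 = f ∧ ∀ n : ℤ, GaloisConnection (g (n + 1)) (g n)) ↔
      (Monotone f ∧
        (∀ a ∈ Set.range f, ∃ b c : Ω, b ≤ c ∧ f ⁻¹' {a} = Set.Icc b c) ∧
        (∀ a : Ω, a ∉ Set.range f → ∃ b c : Ω, b ⋖ c ∧ f b < a ∧ a < f c)) := by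
  constructor
  · rintro ⟨g, rfl, hg⟩
    have h1 := hg 0
    have h2 := hg (-1)
    simp only [zero_add, neg_add_cancel] at h1 h2
    refine ⟨h1.monotone_u, ?_, ?_⟩
    · rintro a ⟨x, rfl⟩
      refine ⟨g 1 (g 0 x), g (-1) (g 0 x), ?_, ?_⟩
      · exact ((h1 _ _).2 le_rfl).trans ((h2 _ _).1 le_rfl)
      · ext y
        simp only [Set.mem_preimage, Set.mem_singleton_iff, Set.mem_Icc]
        rw [h1 _ _, ← h2 _ _, le_antisymm_iff, and_comm]
    · intro a ha
      have hne : ∀ x, g 0 x ≠ a := fun x hx => ha ⟨x, hx⟩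
      have k1 : g 0 (g (-1) a) < a := lt_of_le_of_ne ((h2 _ _).2 le_rfl) (hne _)
      have k2 : a < g 0 (g 1 a) := lt_of_le_of_ne ((h1 _ _).1 le_rfl) (hne _).symm
      refine ⟨g (-1) a, g 1 a, ⟨?_, ?_⟩, k1, k2⟩
      · exact h1.monotone_u.reflect_lt (k1.trans k2)
      · intro c hc hc'
        rw [← not_le, ← h2 _ _, not_le] at hc
        rw [← not_le, h1 _ _, not_le] at hc'
        exact lt_asymm hc hc'
  · rintro ⟨hm, h1, h2⟩
    obtain ⟨s, hs⟩ := aux_shift hint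
    have hl : ∀ y, ∃ z, ∀ x, z ≤ x ↔ y ≤ f x := by
      intro y
      by_cases hy : y ∈ Set.range f
      · obtain ⟨b, c, hbc, he⟩ := h1 y hy
        have hb : f b = y := by
          have : b ∈ f ⁻¹' {y} := he ▸ ⟨le_rfl, hbc⟩
          exact this
        refine ⟨b, fun x => ⟨fun h => hb ▸ hm h, fun h => not_lt.1 fun hx => ?_⟩⟩
        have : x ∈ f ⁻¹' {y} := le_antisymm (hb ▸ hm hx.le) h
        rw [he] at this
        exact absurd this.1 (not_le.2 hx)
      · obtain ⟨b, c, hbc, hb, hc⟩ := h2 y hy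
        refine ⟨c, fun x => ⟨fun h => hc.le.trans (hm h), fun h => not_lt.1 fun hx => ?_⟩⟩
        have hxb : x ≤ b := not_lt.1 fun hx' => hbc.2 hx' hx
        exact absurd (h.trans (hm hxb)) (not_le.2 hb)
    choose l hl using hl
    exact aux_family s hs (l := l) (f := f) (fun y x => hl y x)
end

section
/- Let Ω be a linear order and let g : ℤ → (Ω → Ω) be a family such that (g(n+1), g(n)) is a Galois connection for every n ∈ ℤ; write f = g(0), fℓ = g(1) and fr = g(−1) (so f ∈ F(Ω)). If a ∈ Ω is such that f⁻¹{a} contains at least two distinct elements, then: fℓ(a) is not the least upper bound of {b : b < fℓ(a)}; fr(a) is not the greatest lower bound of {b : fr(a) < b}; a is not the least upper bound of {b : b < a}; and a is not the greatest lower bound of {b : a < b}. -/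
/-- If `f = g 0 ∈ F(Ω)` with dual residual `fl = g 1` and residual `fr = g (-1)`,
and `f⁻¹{a}` has at least two elements, then `fl a` is not a limit point from below,
`fr a` is not a limit point from above, and `a` is not a limit point. -/
theorem stmt_10 {Ω : Type*} [LinearOrder Ω] (g : ℤ → Ω → Ω)
    (hg : ∀ n : ℤ, GaloisConnection (g (n + 1)) (g n)) (a : Ω)
    (h2 : ∃ x y : Ω, x ≠ y ∧ g 0 x = a ∧ g 0 y = a) :
    ¬ IsLUB {b : Ω | b < g 1 a} (g 1 a) ∧
    ¬ IsGLB {b : Ω | g (-1) a < b} (g (-1) a) ∧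
    ¬ IsLUB {b : Ω | b < a} a ∧
    ¬ IsGLB {b : Ω | a < b} a := by
  have G1 : ∀ x y, g 1 x ≤ y ↔ x ≤ g 0 y := fun x y => by have := hg 0 x y; norm_num at this; exact this
  have G0 : ∀ x y, g 0 x ≤ y ↔ x ≤ g (-1) y := fun x y => by have := hg (-1) x y; norm_num at this; exact this
  have Gm : ∀ x y, g (-1) x ≤ y ↔ x ≤ g (-2) y := fun x y => by have := hg (-2) x y; norm_num at this; exact this
  have G2 : ∀ x y, g 2 x ≤ y ↔ x ≤ g 1 y := fun x y => by have := hg 1 x y; norm_num at this; exact this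
  obtain ⟨x, y, hxy, hx, hy⟩ := h2
  have hx1 : g 1 a ≤ x := (G1 _ _).2 hx.ge
  have hy1 : g 1 a ≤ y := (G1 _ _).2 hy.ge
  have hx2 : x ≤ g (-1) a := (G0 _ _).1 hx.le
  have hy2 : y ≤ g (-1) a := (G0 _ _).1 hy.le
  have hpq : ¬ g (-1) a ≤ g 1 a := fun h =>
    hxy (le_antisymm (hx2.trans (h.trans hy1)) (hy2.trans (h.trans hx1)))
  have hp : a ≤ g 0 (g 1 a) := (G1 _ _).1 le_rfl
  have hp' : g 0 (g 1 a) ≤ a := (G0 _ _).2 (hx1.trans hx2)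
  have hq : g 0 (g (-1) a) ≤ a := (G0 _ _).2 le_rfl
  have hq' : a ≤ g 0 (g (-1) a) := (G1 _ _).1 (hx1.trans hx2)
  refine ⟨fun h => hpq ?_, fun h => hpq ?_, fun h => hpq ?_, fun h => hpq ?_⟩
  · refine (Gm _ _).2 (hp.trans ((G0 _ _).2 (h.2 fun b hb => (G0 _ _).1 ((Gm _ _).1 ?_))))
    by_contra hc
    exact absurd ((G1 _ _).2 (hp.trans ((G0 _ _).2 (not_le.1 hc).le))) (not_le.2 hb)
  · refine (G2 _ _).1 (le_trans ((G1 _ _).1 (h.2 fun b hb => (G1 (g 2 (g (-1) a)) b).2 ((G2 _ _).2 ?_))) hq)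
    by_contra hc
    exact absurd ((G0 _ _).1 (((G1 _ _).1 (not_le.1 hc).le).trans hq)) (not_le.2 hb)
  · refine (Gm _ _).2 (h.2 fun b hb => (Gm _ _).1 ?_)
    by_contra hc
    exact absurd (hp.trans ((G0 _ _).2 (not_le.1 hc).le)) (not_le.2 hb)
  · refine (G2 _ _).1 (h.2 fun b hb => (G2 _ _).2 ?_)
    by_contra hc
    exact absurd (((G1 _ _).1 (not_le.1 hc).le).trans hq) (not_le.2 hb)
end

section
/- For every linear order Ω there exist an integral chain Ω′, an order embedding ι : Ω → Ω′, and a map Φ : (Ω → Ω) → (Ω′ → Ω′) such that for all f, h ∈ F(Ω): (i) Φ(f) ∈ F(Ω′); (ii) Φ(f) ∘ ι = ι ∘ f (so Φ(f) extends f along ι, and in particular Φ is injective on F(Ω)); (iii) Φ(f ∘ h) = Φ(f) ∘ Φ(h); (iv) Φ of the pointwise maximum of f and h equals the pointwise maximum of Φ(f) and Φ(h), and likewise for pointwise minimum; (v) Φ of the identity is the identity; (vi) if (h, f) is a Galois connection then (Φ(h), Φ(f)) is a Galois connection. -/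
universe u

/-- A chain is integral if every element has an upper cover and a lower cover. -/
def IsIntegralChain (α : Type*) [LinearOrder α] : Prop :=
  ∀ a : α, (∃ b, a ⋖ b) ∧ (∃ b, b ⋖ a)

/-- `f ∈ F(α)`: `f` has residuals and dual residuals of all orders. -/
def InFF {α : Type*} [LinearOrder α] (f : α → α) : Prop :=
  ∃ g : ℤ → α → α, g 0 = f ∧ ∀ n : ℤ, GaloisConnection (g (n + 1)) (g n)

/-- The properties of the embedding `Φ : F(Ω) → F(Ω')` along `ι : Ω ↪o Ω'`. -/
def GoodExtension (Ω : Type u) [LinearOrder Ω] (Ω' : Type u) [LinearOrder Ω']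
    (ι : Ω ↪o Ω') (Φ : (Ω → Ω) → Ω' → Ω') : Prop :=
  ∀ f h : Ω → Ω, InFF f → InFF h →
    InFF (Φ f) ∧
    (∀ x : Ω, Φ f (ι x) = ι (f x)) ∧
    Φ (f ∘ h) = Φ f ∘ Φ h ∧
    Φ (fun x => max (f x) (h x)) = (fun x => max (Φ f x) (Φ h x)) ∧
    Φ (fun x => min (f x) (h x)) = (fun x => min (Φ f x) (Φ h x)) ∧
    Φ id = id ∧
    (GaloisConnection h f → GaloisConnection (Φ h) (Φ f))

def Fam {α : Type*} [LinearOrder α] (g : ℤ → α → α) : Prop :=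
  ∀ n : ℤ, GaloisConnection (g (n + 1)) (g n)

theorem Fam.gc {α : Type*} [LinearOrder α] {g : ℤ → α → α} (hg : Fam g) {m n : ℤ}
    (h : m = n + 1) : GaloisConnection (g m) (g n) := by
  subst h; exact hg n

theorem Fam.shift {α : Type*} [LinearOrder α] {g : ℤ → α → α} (hg : Fam g) (k : ℤ) :
    Fam (fun n => g (n + k)) := fun n => hg.gc (by ring)

/-- Coinductive integrality of an element. -/
def Igl {α : Type*} [LinearOrder α] (a : α) : Prop :=
  ∃ S : Set α, a ∈ S ∧ ∀ x ∈ S, (∃ y ∈ S, x ⋖ y) ∧ (∃ y ∈ S, y ⋖ x)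

theorem Igl.up {α : Type*} [LinearOrder α] {a : α} (h : Igl a) : ∃ b, Igl b ∧ a ⋖ b := by
  obtain ⟨S, ha, hS⟩ := h
  obtain ⟨y, hy, hc⟩ := (hS a ha).1
  exact ⟨y, ⟨S, hy, hS⟩, hc⟩

theorem Igl.down {α : Type*} [LinearOrder α] {a : α} (h : Igl a) : ∃ b, Igl b ∧ b ⋖ a := by
  obtain ⟨S, ha, hS⟩ := h
  obtain ⟨y, hy, hc⟩ := (hS a ha).2
  exact ⟨y, ⟨S, hy, hS⟩, hc⟩

theorem cov_transfer {α : Type*} [LinearOrder α] {p q r : α → α} (h1 : GaloisConnection p q)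
    (h2 : GaloisConnection q r) {b b' : α} (h : b ⋖ b') : r b ⋖ p b' := by
  refine ⟨?_, ?_⟩
  · by_contra hc
    rw [not_lt, h1 b' _] at hc
    exact absurd (hc.trans (h2.l_u_le b)) (not_le.2 h.1)
  · intro z hz hz'
    have h3 : q z < b' := by
      by_contra hc
      rw [not_lt, ← h1 b' _] at hc
      exact absurd hz' (not_lt.2 hc)
    have h4 : q z ≤ b := by
      by_contra hc
      exact h.2 (not_le.1 hc) h3
    rw [h2 z b] at h4
    exact absurd hz (not_lt.2 h4)

theorem ni_up {α : Type*} [LinearOrder α] {g : ℤ → α → α} (hg : Fam g) {x y : α}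
    (hxy : x < y) (he : g 0 x = g 0 y) :
    g 0 x ⋖ g 2 y ∧ ∃ y', y < y' ∧ g 2 y = g 2 y' := by
  have G0 : GaloisConnection (g 1) (g 0) := hg.gc (by norm_num)
  have G1 : GaloisConnection (g 2) (g 1) := hg.gc (by norm_num)
  have hlt : g 0 x < g 2 y := by
    by_contra hc
    rw [not_lt, G1 y _] at hc
    exact absurd (hc.trans (G0.l_u_le x)) (not_le.2 hxy)
  refine ⟨⟨hlt, ?_⟩, g 1 (g 2 y), ?_, ?_⟩
  · intro z hz hz'
    have h3 : g 1 z < y := by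
      by_contra hc
      rw [not_lt, ← G1 y _] at hc
      exact absurd hz' (not_lt.2 hc)
    have h4 := h3.le
    rw [G0 z y, ← he] at h4
    exact absurd hz (not_lt.2 h4)
  · by_contra hc
    rw [not_lt, G0 _ y, ← he] at hc
    exact absurd hlt (not_lt.2 hc)
  · exact (G1.l_u_l_eq_l y).symm

theorem ni_down {α : Type*} [LinearOrder α] {g : ℤ → α → α} (hg : Fam g) {x y : α}
    (hxy : x < y) (he : g 0 x = g 0 y) :
    g (-2) x ⋖ g 0 x ∧ ∃ x', x' < x ∧ g (-2) x' = g (-2) x := by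
  have G0 : GaloisConnection (g 0) (g (-1)) := hg.gc (by norm_num)
  have G1 : GaloisConnection (g (-1)) (g (-2)) := hg.gc (by norm_num)
  have hlt : g (-2) x < g 0 x := by
    by_contra hc
    rw [not_lt, ← G1 _ x, he] at hc
    exact absurd ((G0.le_u_l y).trans hc) (not_le.2 hxy)
  refine ⟨⟨hlt, ?_⟩, g (-1) (g (-2) x), ?_, ?_⟩
  · intro z hz hz'
    have h3 : x < g (-1) z := by
      by_contra hc
      rw [not_lt, G1 _ x] at hc
      exact absurd hz (not_lt.2 hc)
    have h4 := h3.le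
    rw [← G0 x z] at h4
    exact absurd hz' (not_lt.2 h4)
  · by_contra hc
    rw [not_lt, ← G0 x _] at hc
    exact absurd hlt (not_lt.2 hc)
  · exact (G1.u_l_u_eq_u x)

theorem igl_of_ni {α : Type*} [LinearOrder α] {g : ℤ → α → α} (hg : Fam g) {x y : α}
    (hxy : x < y) (he : g 0 x = g 0 y) : Igl (g 0 x) := by
  refine ⟨{b | ∃ g : ℤ → α → α, Fam g ∧ ∃ x y, x < y ∧ g 0 x = g 0 y ∧ b = g 0 x},
    ⟨g, hg, x, y, hxy, he, rfl⟩, ?_⟩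
  rintro b ⟨g, hg, x, y, hxy, he, rfl⟩
  constructor
  · obtain ⟨h1, y', hy, hy'⟩ := ni_up hg hxy he
    exact ⟨_, ⟨_, hg.shift 2, y, y', hy, by simpa using hy', by simp⟩, h1⟩
  · obtain ⟨h1, y', hy, hy'⟩ := ni_down hg hxy he
    exact ⟨_, ⟨_, hg.shift (-2), y', x, hy, by simpa using hy', by simpa using hy'.symm⟩, h1⟩

theorem igl_of_ni' {α : Type*} [LinearOrder α] {g : ℤ → α → α} (hg : Fam g) {x y : α}
    (hxy : x < y) (he : g 0 x = g 0 y) (k : ℤ) : Igl (g k (g 0 x)) := by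
  refine ⟨{b | ∃ g : ℤ → α → α, Fam g ∧ ∃ x y, x < y ∧ g 0 x = g 0 y ∧ b = g k (g 0 x)},
    ⟨g, hg, x, y, hxy, he, rfl⟩, ?_⟩
  rintro b ⟨g, hg, x, y, hxy, he, rfl⟩
  constructor
  · obtain ⟨h1, y', hy, hy'⟩ := ni_up hg hxy he
    exact ⟨g (k+2) (g 2 y), ⟨_, hg.shift 2, y, y', hy, by simpa using hy', by simp⟩,
      cov_transfer (hg.gc (n := k+1) (by ring)) (hg.gc (by ring)) h1⟩
  · obtain ⟨h1, y', hy, hy'⟩ := ni_down hg hxy he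
    exact ⟨g (k + -2) (g (-2) x),
      ⟨_, hg.shift (-2), y', x, hy, by simpa using hy', by simp [hy']⟩,
      cov_transfer (hg.gc (n := k-1) (by ring)) (hg.gc (by ring)) h1⟩

theorem igl_map {α : Type*} [LinearOrder α] {g : ℤ → α → α} (hg : Fam g) {a : α}
    (ha : Igl a) : Igl (g 0 a) := by
  by_cases hI : Igl (g 0 a)
  · exact hI
  refine ⟨{b | ∃ g : ℤ → α → α, Fam g ∧ ∃ a, Igl a ∧ b = g 0 a}, ⟨g, hg, a, ha, rfl⟩, ?_⟩
  have key : ∀ b : α, Igl b → b ∈ {b | ∃ g : ℤ → α → α, Fam g ∧ ∃ a, Igl a ∧ b = g 0 a} :=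
    fun b hb => ⟨fun _ => id, fun _ => GaloisConnection.id, b, hb, rfl⟩
  clear hI ha hg
  rintro b ⟨g, hg, a, ha, rfl⟩
  have G0 : GaloisConnection (g 1) (g 0) := hg.gc (by norm_num)
  have Gm : GaloisConnection (g 0) (g (-1)) := hg.gc (by norm_num)
  by_cases hI : Igl (g 0 a)
  · obtain ⟨u, hu, hu'⟩ := hI.up
    obtain ⟨d, hd, hd'⟩ := hI.down
    exact ⟨⟨u, key u hu, hu'⟩, ⟨d, key d hd, hd'⟩⟩
  constructor
  · obtain ⟨a', ha', hc⟩ := ha.up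
    refine ⟨g 0 a', ⟨g, hg, a', ha', rfl⟩, ?_, ?_⟩
    · refine lt_of_le_of_ne (G0.monotone_u hc.1.le) fun he => hI (igl_of_ni hg hc.1 he)
    · intro z hz hz'
      apply hI
      have e1 : ∀ w, g 0 a ≤ w → w < g 0 a' → g (-1) w = a := by
        intro w h1 h2
        rw [Gm] at h1
        refine le_antisymm ?_ h1
        by_contra h3
        have h4 : a' ≤ g (-1) w := by
          by_contra h5
          exact hc.2 (not_le.1 h3) (not_le.1 h5)
        rw [← Gm] at h4
        exact absurd h2 (not_lt.2 h4)
      have e2 := e1 _ le_rfl (hz.trans hz')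
      have e3 := e1 _ hz.le hz'
      have := igl_of_ni' (hg.shift (-1)) hz (by simp [e2, e3]) 1
      simpa [e2] using this
  · obtain ⟨a', ha', hc⟩ := ha.down
    refine ⟨g 0 a', ⟨g, hg, a', ha', rfl⟩, ?_, ?_⟩
    · refine lt_of_le_of_ne (G0.monotone_u hc.1.le) fun he => hI (he ▸ igl_of_ni hg hc.1 he)
    · intro z hz hz'
      apply hI
      have e1 : ∀ w, g 0 a' < w → w ≤ g 0 a → g 1 w = a := by
        intro w h1 h2
        rw [← G0] at h2
        refine le_antisymm h2 ?_
        by_contra h3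
        have h4 : g 1 w ≤ a' := by
          by_contra h5
          exact hc.2 (not_le.1 h5) (not_le.1 h3)
        rw [G0] at h4
        exact absurd h1 (not_lt.2 h4)
      have e2 := e1 _ hz hz'.le
      have e3 := e1 _ (hz.trans hz') le_rfl
      have := igl_of_ni' (hg.shift 1) hz' (by simp [e2, e3]) (-1)
      simpa [e2] using this

theorem InFF.igl {α : Type*} [LinearOrder α] {f : α → α} (hf : InFF f) {a : α}
    (ha : Igl a) : Igl (f a) := by
  obtain ⟨g, rfl, hg⟩ := hf
  exact igl_map hg ha

theorem InFF.ni {α : Type*} [LinearOrder α] {f : α → α} (hf : InFF f) {x y : α}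
    (hxy : x < y) (he : f x = f y) : Igl (f x) := by
  obtain ⟨g, rfl, hg⟩ := hf
  exact igl_of_ni hg hxy he

abbrev ExtChain (Ω : Type u) [LinearOrder Ω] : Type u :=
  {p : Ω ×ₗ ℤ // Igl (ofLex p).1 → (ofLex p).2 = 0}

open Classical in
noncomputable def kap {Ω : Type u} [LinearOrder Ω] (n : ℤ) (b : Ω) : ExtChain Ω :=
  ⟨toLex (b, if Igl b then 0 else n), fun h => by
    have h' : Igl b := h
    simp [h']⟩

theorem kap_mono {Ω : Type u} [LinearOrder Ω] (n : ℤ) :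
    Monotone (kap n : Ω → ExtChain Ω) := by
  intro a b hab
  rcases hab.lt_or_eq with h | rfl
  · exact (Prod.Lex.toLex_le_toLex).2 (Or.inl h)
  · exact le_rfl

noncomputable def phi {Ω : Type u} [LinearOrder Ω] (f : Ω → Ω) (p : ExtChain Ω) : ExtChain Ω :=
  kap (ofLex p.1).2 (f (ofLex p.1).1)

theorem kap_surj {Ω : Type u} [LinearOrder Ω] (p : ExtChain Ω) :
    kap (ofLex p.1).2 (ofLex p.1).1 = p := by
  obtain ⟨q, h⟩ := p
  apply Subtype.ext
  by_cases hI : Igl (ofLex q).1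
  · have h0 := h hI
    simp only [kap, hI, if_true]
    rw [← h0]
    rfl
  · simp only [kap, hI, if_false]
    rfl

open Classical in
theorem kap_le {Ω : Type u} [LinearOrder Ω] (n m : ℤ) (a b : Ω) :
    kap n a ≤ kap m b ↔ a < b ∨ (a = b ∧ (Igl a ∨ n ≤ m)) := by
  have : kap n a ≤ kap m b ↔ a < b ∨ (a = b ∧ (if Igl a then 0 else n) ≤ (if Igl b then 0 else m)) :=
    Prod.Lex.toLex_le_toLex
  rw [this]
  refine or_congr Iff.rfl (and_congr_right ?_)
  rintro rfl
  by_cases h : Igl a <;> simp [h]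

theorem phi_kap {Ω : Type u} [LinearOrder Ω] {f : Ω → Ω} (hf : InFF f) (n : ℤ) (a : Ω) :
    phi f (kap n a) = kap n (f a) := by
  by_cases h : Igl a
  · have := hf.igl h
    simp [phi, kap, h, this]
  · have e : (ofLex (kap n a).1).2 = n := by simp [kap, h]
    have e' : (ofLex (kap n a).1).1 = a := rfl
    rw [phi, e, e']

theorem phi_gc {Ω : Type u} [LinearOrder Ω] {f h : Ω → Ω} (hf : InFF f) (hh : InFF h)
    (G : GaloisConnection h f) : GaloisConnection (phi h) (phi f) := by
  intro p q
  rw [← kap_surj p, ← kap_surj q, phi_kap hh, phi_kap hf, kap_le, kap_le]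
  generalize (ofLex p.1).2 = n
  generalize (ofLex p.1).1 = a
  generalize (ofLex q.1).2 = m
  generalize (ofLex q.1).1 = b
  constructor
  · rintro (h1 | ⟨rfl, h1⟩)
    · rcases ((G a b).1 h1.le).lt_or_eq with h2 | rfl
      · exact Or.inl h2
      · exact Or.inr ⟨rfl, Or.inl (by
          have e : f (h (f b)) = f b := G.u_l_u_eq_u b
          exact e ▸ hf.ni h1 e)⟩
    · rcases (G.le_u_l a).lt_or_eq with h2 | h2
      · exact Or.inl h2
      · refine Or.inr ⟨h2, h1.imp (fun h3 => ?_) id⟩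
        rw [h2]; exact hf.igl h3
  · rintro (h1 | ⟨rfl, h1⟩)
    · rcases ((G a b).2 h1.le).lt_or_eq with h2 | rfl
      · exact Or.inl h2
      · exact Or.inr ⟨rfl, Or.inl (hh.ni h1 (G.l_u_l_eq_l a).symm)⟩
    · rcases (G.l_u_le b).lt_or_eq with h2 | h2
      · exact Or.inl h2
      · exact Or.inr ⟨h2, h1.imp (fun h3 => hh.igl h3) id⟩

theorem kap_lt {Ω : Type u} [LinearOrder Ω] (n m : ℤ) (a b : Ω) :
    kap n a < kap m b ↔ a < b ∨ (a = b ∧ (¬ Igl a ∧ n < m)) := by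
  rw [← not_le, kap_le]
  rcases lt_trichotomy a b with h | rfl | h
  · simp [h, h.not_gt, h.ne']
  · simp
  · simp [h, h.not_gt, h.ne']

theorem kap_cov {Ω : Type u} [LinearOrder Ω] (n : ℤ) {a : Ω} (h : ¬ Igl a) :
    kap n a ⋖ kap (n+1) a := by
  refine ⟨by simp [kap_lt, h], fun c => ?_⟩
  rw [← kap_surj c, kap_lt, kap_lt]
  generalize (ofLex c.1).2 = m
  generalize (ofLex c.1).1 = b
  rintro (h1 | ⟨rfl, h1⟩) (h2 | ⟨h2, h3⟩)
  · exact lt_asymm h1 h2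
  · exact h1.ne h2.symm
  · exact lt_irrefl _ h2
  · omega

theorem kap_cov' {Ω : Type u} [LinearOrder Ω] (n m : ℤ) {a b : Ω} (ha : Igl a) (hb : Igl b)
    (h : a ⋖ b) : kap n a ⋖ kap m b := by
  refine ⟨by simp [kap_lt, h.1], fun c => ?_⟩
  rw [← kap_surj c, kap_lt, kap_lt]
  generalize (ofLex c.1).2 = m
  generalize (ofLex c.1).1 = b
  rintro (h1 | ⟨rfl, h1⟩) (h2 | ⟨h2, h3⟩)
  · exact h.2 h1 h2
  · subst h2; exact h3.1 hb
  · exact h1.1 ha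
  · exact h1.1 ha

/-- Cayley/Holland-style embedding: for every chain `Ω` there is an integral chain
`Ω'` and an embedding of `F(Ω)` into `F(Ω')` preserving all the structure. -/
theorem stmt_12 (Ω : Type u) [LinearOrder Ω] :
    ∃ (Ω' : Type u) (inst : LinearOrder Ω')
      (ι : @OrderEmbedding Ω Ω' _ inst.toLE) (Φ : (Ω → Ω) → Ω' → Ω'),
      @IsIntegralChain Ω' inst ∧ @GoodExtension Ω _ Ω' inst ι Φ := by
  refine ⟨ExtChain Ω, inferInstance, OrderEmbedding.ofMapLEIff (kap 0) (fun a b => ?_), phi, ?_, ?_⟩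
  · rw [kap_le]; simp [le_iff_lt_or_eq]
  · intro p
    rw [← kap_surj p]
    generalize (ofLex p.1).2 = n
    generalize (ofLex p.1).1 = a
    by_cases ha : Igl a
    · obtain ⟨u, hu, hu'⟩ := ha.up
      obtain ⟨d, hd, hd'⟩ := ha.down
      exact ⟨⟨_, kap_cov' n 0 ha hu hu'⟩, ⟨_, kap_cov' 0 n hd ha hd'⟩⟩
    · refine ⟨⟨_, kap_cov n ha⟩, ⟨kap (n-1) a, ?_⟩⟩
      simpa using kap_cov (n-1) ha
  · intro f h hf hh
    refine ⟨?_, fun x => phi_kap hf 0 x, ?_, ?_, ?_, ?_, fun G => phi_gc hf hh G⟩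
    · obtain ⟨g, rfl, hg⟩ := hf
      have hF : ∀ n, InFF (g n) := fun n => ⟨fun k => g (k + n), by simp, Fam.shift hg n⟩
      exact ⟨fun n => phi (g n), rfl, fun n => phi_gc (hF n) (hF (n+1)) (hg n)⟩
    · funext p
      exact (phi_kap hf _ _).symm
    · funext p
      exact (kap_mono _).map_max
    · funext p
      exact (kap_mono _).map_min
    · funext p
      exact kap_surj p
end

section
/- Let Δ be a finite linear order, let Y be a binary relation on Δ such that Y(a, b) implies a is covered by b, and let G be a binary relation on Δ that is an order-preserving partial function: G(x, u) and G(x, v) imply u = v, and G(x, u), G(y, v) with x ≤ y imply u ≤ v. Define the relation Gℓ on Δ by: Gℓ(x, b) iff there exist c, a, d ∈ Δ with G(b, c), G(a, d), Y(a, b), and d < x ≤ c. Then Gℓ is an order-preserving partial function: Gℓ(x, b) and Gℓ(x, b′) imply b = b′, and Gℓ(x, b), Gℓ(y, b′) with x ≤ y imply b ≤ b′. -/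
/-- For an order-preserving partial function `G` on a finite c-chain `(Δ, ≤, Y)`,
the relation `Gℓ` is an order-preserving partial function. -/
theorem stmt_13 {Δ : Type*} [LinearOrder Δ] [Finite Δ]
    (Y : Δ → Δ → Prop) (hY : ∀ a b, Y a b → a ⋖ b)
    (G : Δ → Δ → Prop)
    (hGfun : ∀ x u v, G x u → G x v → u = v)
    (hGmono : ∀ x y u v, G x u → G y v → x ≤ y → u ≤ v) :
    ∀ Gl : Δ → Δ → Prop,
      (Gl = fun x b => ∃ c a d, G b c ∧ G a d ∧ Y a b ∧ d < x ∧ x ≤ c) →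
      (∀ x b b', Gl x b → Gl x b' → b = b') ∧
      (∀ x y b b', Gl x b → Gl y b' → x ≤ y → b ≤ b') := by
  rintro Gl rfl
  have key : ∀ x y b b', (∃ c a d, G b c ∧ G a d ∧ Y a b ∧ d < x ∧ x ≤ c) →
      (∃ c a d, G b' c ∧ G a d ∧ Y a b' ∧ d < y ∧ y ≤ c) → x ≤ y → b ≤ b' := by
    rintro x y b b' ⟨c, a, d, _, had, hab, hdx, _⟩ ⟨c', a', d', hbc', _, _, _, hyc'⟩ hxy
    by_contra hlt
    have h1 : b' ≤ a := not_lt.mp fun h => (hY a b hab).2 h (not_le.mp hlt)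
    have h2 : c' ≤ d := hGmono _ _ _ _ hbc' had h1
    exact absurd (hdx.trans_le (hxy.trans (hyc'.trans h2))) (lt_irrefl _)
  exact ⟨fun x b b' h h' => le_antisymm (key x x b b' h h' le_rfl) (key x x b' b h' h le_rfl), key⟩
end

section
/- Let f : ℤ → ℤ be monotone and suppose that for every a in the range of f there exist b, c ∈ ℤ with f⁻¹{a} equal to the closed interval [b, c]. Then f is residuated and dually residuated, and consequently f has residuals and dual residuals of all orders (f ∈ F(ℤ)): there exists a family g : ℤ → (ℤ → ℤ) with g(0) = f such that for every n ∈ ℤ, (g(n+1), g(n)) is a Galois connection. -/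
def PP (f : ℤ → ℤ) : Prop :=
  Monotone f ∧ (∀ b, ∃ a, b < f a) ∧ (∀ b, ∃ a, f a < b)

theorem PP_right (f : ℤ → ℤ) (h : PP f) : ∃ fr, GaloisConnection f fr ∧ PP fr := by
  obtain ⟨hm, hu, hl⟩ := h
  have key : ∀ b, ∃ m, ∀ a, f a ≤ b ↔ a ≤ m := by
    intro b
    obtain ⟨M, hM⟩ := hu b
    obtain ⟨k, hk⟩ := hl b
    obtain ⟨m, h1, h2⟩ := Int.exists_greatest_of_bdd (P := fun a => f a ≤ b)
      ⟨M, fun z hz => by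
        by_contra hc
        have := hm (show M ≤ z by omega)
        omega⟩ ⟨k, hk.le⟩
    exact ⟨m, fun a => ⟨h2 a, fun h => (hm h).trans h1⟩⟩
  choose fr hfr using key
  have gc : GaloisConnection f fr := fun a b => hfr b a
  refine ⟨fr, gc, gc.monotone_u, fun b => ⟨f (b+1), ?_⟩, fun b => ⟨f b - 1, ?_⟩⟩
  · have := gc.le_u_l (b+1)
    omega
  · by_contra hc
    have := (hfr (f b - 1) b).2 (by omega)
    omega

theorem PP_left (f : ℤ → ℤ) (h : PP f) : ∃ fl, GaloisConnection fl f ∧ PP fl := by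
  obtain ⟨hm, hu, hl⟩ := h
  have key : ∀ a, ∃ m, ∀ b, m ≤ b ↔ a ≤ f b := by
    intro b
    obtain ⟨M, hM⟩ := hu b
    obtain ⟨k, hk⟩ := hl b
    obtain ⟨m, h1, h2⟩ := Int.exists_least_of_bdd (P := fun a => b ≤ f a)
      ⟨k, fun z hz => by
        by_contra hc
        have := hm (show z ≤ k by omega)
        omega⟩ ⟨M, hM.le⟩
    exact ⟨m, fun a => ⟨fun h => h1.trans (hm h), h2 a⟩⟩
  choose fl hfl using key
  have gc : GaloisConnection fl f := fun a b => hfl a b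
  refine ⟨fl, gc, gc.monotone_l, fun b => ⟨f b + 1, ?_⟩, fun b => ⟨f (b-1), ?_⟩⟩
  · by_contra hc
    have := (hfl (f b + 1) b).1 (by omega)
    omega
  · have := gc.l_u_le (b-1)
    omega

theorem PP_of (f : ℤ → ℤ) (hmono : Monotone f)
    (h1 : ∀ a ∈ Set.range f, ∃ b c : ℤ, f ⁻¹' {a} = Set.Icc b c) : PP f := by
  have step : ∀ x, (∃ y, f x < f y) ∧ ∃ y, f y < f x := by
    intro x
    obtain ⟨b, c, h⟩ := h1 (f x) ⟨x, rfl⟩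
    have hh : ∀ y, f y = f x ↔ b ≤ y ∧ y ≤ c := fun y => by
      simpa using Set.ext_iff.1 h y
    have hx := (hh x).1 rfl
    refine ⟨⟨c+1, ?_⟩, ⟨b-1, ?_⟩⟩
    · refine lt_of_le_of_ne (hmono (by omega)) fun e => ?_
      have := (hh (c+1)).1 e.symm
      omega
    · refine lt_of_le_of_ne (hmono (by omega)) fun e => ?_
      have := (hh (b-1)).1 e
      omega
  have up : ∀ n : ℕ, (∃ y, f 0 + n ≤ f y) ∧ ∃ y, f y ≤ f 0 - n := by
    intro n
    induction n with
    | zero => exact ⟨⟨0, by simp⟩, ⟨0, by simp⟩⟩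
    | succ n ih =>
      obtain ⟨⟨y, hy⟩, ⟨z, hz⟩⟩ := ih
      obtain ⟨y', hy'⟩ := (step y).1
      obtain ⟨z', hz'⟩ := (step z).2
      exact ⟨⟨y', by push_cast; omega⟩, ⟨z', by push_cast; omega⟩⟩
  refine ⟨hmono, fun b => ?_, fun b => ?_⟩
  · obtain ⟨y, hy⟩ := (up (b - f 0 + 1).toNat).1
    exact ⟨y, by omega⟩
  · obtain ⟨y, hy⟩ := (up (f 0 - b + 1).toNat).2
    exact ⟨y, by omega⟩

/-- A monotone `f : ℤ → ℤ` whose preimages of range points are closed intervals is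
residuated and dually residuated, and hence belongs to `F(ℤ)`. -/
theorem stmt_15 (f : ℤ → ℤ) (hmono : Monotone f)
    (h1 : ∀ a ∈ Set.range f, ∃ b c : ℤ, f ⁻¹' {a} = Set.Icc b c) :
    ((∃ fr : ℤ → ℤ, GaloisConnection f fr) ∧ (∃ fl : ℤ → ℤ, GaloisConnection fl f)) ∧
      ∃ g : ℤ → ℤ → ℤ, g 0 = f ∧ ∀ n : ℤ, GaloisConnection (g (n + 1)) (g n) := by
  have hf := PP_of f hmono h1
  have hR : ∀ s : {f // PP f}, ∃ t : {f // PP f}, GaloisConnection s.1 t.1 := fun s => by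
    obtain ⟨t, h, ht⟩ := PP_right s.1 s.2
    exact ⟨⟨t, ht⟩, h⟩
  have hL : ∀ s : {f // PP f}, ∃ t : {f // PP f}, GaloisConnection t.1 s.1 := fun s => by
    obtain ⟨t, h, ht⟩ := PP_left s.1 s.2
    exact ⟨⟨t, ht⟩, h⟩
  choose R hR using hR
  choose L hL using hL
  refine ⟨⟨⟨_, hR ⟨f, hf⟩⟩, ⟨_, hL ⟨f, hf⟩⟩⟩,
    fun n => if 0 ≤ n then (L^[n.toNat] ⟨f, hf⟩).1 else (R^[(-n).toNat] ⟨f, hf⟩).1,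
    by simp, fun n => ?_⟩
  by_cases h : 0 ≤ n
  · have e : (n+1).toNat = n.toNat + 1 := by omega
    simp only [h, show 0 ≤ n + 1 by omega, if_true, e, Function.iterate_succ_apply']
    exact hL _
  · have e : (-n).toNat = (-(n+1)).toNat + 1 := by omega
    simp only [h, if_false, e, Function.iterate_succ_apply']
    split_ifs with h'
    · have : n = -1 := by omega
      subst this
      exact hR _
    · exact hR _
end

section
/- Let q ∈ ℤ with 1 ≤ q, let D be a subset of the interval [1, q] ⊆ ℤ, and let g : ℤ → ℤ satisfy g(x) ∈ [1, q] for all x ∈ D and be order-preserving on D (x, y ∈ D with x ≤ y imply g(x) ≤ g(y)). Then there exists a monotone function f : ℤ → ℤ such that f(n) = n for all n ∉ [1, q], f(x) = g(x) for all x ∈ D, and f is residuated and dually residuated. -/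
/-- An order-preserving partial function `g` defined on a subset of `[1, q] ⊆ ℤ` with
values in `[1, q]` extends to a monotone, residuated and dually residuated function
on `ℤ` that is the identity outside `[1, q]`. -/
theorem stmt_16 (q : ℤ) (hq : 1 ≤ q) (D : Set ℤ) (hD : D ⊆ Set.Icc 1 q)
    (g : ℤ → ℤ) (hg1 : ∀ x ∈ D, g x ∈ Set.Icc 1 q)
    (hg2 : ∀ x ∈ D, ∀ y ∈ D, x ≤ y → g x ≤ g y) :
    ∃ f : ℤ → ℤ, Monotone f ∧
      (∀ n : ℤ, n ∉ Set.Icc 1 q → f n = n) ∧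
      (∀ x ∈ D, f x = g x) ∧
      (∃ fr : ℤ → ℤ, GaloisConnection f fr) ∧
      (∃ fl : ℤ → ℤ, GaloisConnection fl f) := by
  have key : ∀ n : ℤ, ∃ m : ℤ, (n ∉ Set.Icc 1 q → m = n) ∧ (n ∈ Set.Icc 1 q →
      (m = 1 ∨ ∃ x ∈ D, x ≤ n ∧ g x = m) ∧ 1 ≤ m ∧ ∀ x ∈ D, x ≤ n → g x ≤ m) := by
    intro n
    by_cases hn : n ∈ Set.Icc 1 q
    · obtain ⟨m, h1, h2⟩ := Int.exists_greatest_of_bdd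
        (P := fun v => v = 1 ∨ ∃ x ∈ D, x ≤ n ∧ g x = v)
        ⟨q, by
          rintro z (rfl | ⟨x, hx, _, rfl⟩)
          · exact hq
          · exact (hg1 x hx).2⟩ ⟨1, Or.inl rfl⟩
      exact ⟨m, fun h => absurd hn h, fun _ =>
        ⟨h1, h2 1 (Or.inl rfl), fun x hx hxn => h2 _ (Or.inr ⟨x, hx, hxn, rfl⟩)⟩⟩
    · exact ⟨n, fun _ => rfl, fun h => absurd h hn⟩
  choose f hf1 hf2 using key
  have hout : ∀ n, (n < 1 ∨ q < n) → f n = n := fun n hn =>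
    hf1 n (by rw [Set.mem_Icc]; omega)
  have hin : ∀ n, 1 ≤ n → n ≤ q → 1 ≤ f n ∧ f n ≤ q := by
    intro n h1 h2
    obtain ⟨h, h3, _⟩ := hf2 n ⟨h1, h2⟩
    refine ⟨h3, ?_⟩
    rcases h with h | ⟨x, hx, _, h⟩
    · omega
    · rw [← h]; exact (hg1 x hx).2
  have hmono : Monotone f := by
    intro a b hab
    by_cases ha : a < 1 ∨ q < a
    · have := hout a ha
      by_cases hb : b < 1 ∨ q < b
      · have := hout b hb
        omega
      · have := hin b (by omega) (by omega)
        omega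
    · have := hin a (by omega) (by omega)
      by_cases hb : b < 1 ∨ q < b
      · have := hout b hb
        omega
      · obtain ⟨h, _, _⟩ := hf2 a ⟨by omega, by omega⟩
        obtain ⟨_, h4, h5⟩ := hf2 b ⟨by omega, by omega⟩
        rcases h with h | ⟨x, hx, hxa, h⟩
        · omega
        · rw [← h]; exact h5 x hx (by omega)
  refine ⟨f, hmono, hf1, ?_, ?_, ?_⟩
  · intro x hx
    obtain ⟨h, _, h5⟩ := hf2 x (hD hx)
    have h6 := h5 x hx le_rfl
    have h7 := (hg1 x hx).1
    rcases h with h | ⟨y, hy, hyx, h⟩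
    · omega
    · have := hg2 y hy x hx hyx
      omega
  · have : ∀ b, ∃ c, f c ≤ b ∧ ∀ z, f z ≤ b → z ≤ c := by
      intro b
      refine Int.exists_greatest_of_bdd (P := fun a => f a ≤ b) ⟨max b q, ?_⟩ ⟨min b 0, ?_⟩
      · intro z hz
        by_contra hc
        have := hout z (by omega)
        omega
      · have := hout (min b 0) (by omega)
        omega
    choose fr h1 h2 using this
    exact ⟨fr, fun a b => ⟨fun h => h2 b a h, fun h => (hmono h).trans (h1 b)⟩⟩
  · have : ∀ b, ∃ c, b ≤ f c ∧ ∀ z, b ≤ f z → c ≤ z := by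
      intro b
      refine Int.exists_least_of_bdd (P := fun a => b ≤ f a) ⟨min b 0, ?_⟩ ⟨max b (q + 1), ?_⟩
      · intro z hz
        by_contra hc
        have := hout z (by omega)
        omega
      · have := hout (max b (q + 1)) (by omega)
        omega
    choose fl h1 h2 using this
    exact ⟨fl, fun a b => ⟨fun h => (h1 a).trans (hmono h), fun h => h2 a b h⟩⟩
end
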